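/- arXiv:1912.03166 — 4 statements merged into one kernel-verified Lean document; each statement's English description precedes it below -/
import Mathlib

section
/- Let D = ∪_{h=1}^H D_h where D_h = {x ∈ ℝⁿ : D_h x − d_h ∈ Q_h}, with D_h ∈ ℝ^{m_h×n}, d_h ∈ ℝ^{m_h} and Q_h ⊆ ℝ^{m_h} a proper cone, and let S = {x ∈ ℝⁿ : ∃ y_1,…,y_H ∈ ℝⁿ, z_1,…,z_H ∈ ℝ with Σ_h y_h = x, Σ_h z_h = 1, z_h ≥ 0 for all h, and D_h y_h − z_h d_h ∈ Q_h for all h}. If D_h ≠ ∅ for every h, then S ⊆ cl conv(D), the closed convex hull of D. -/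
open Matrix

/-- A proper cone: closed, convex, closed under nonnegative scaling,
pointed (`K ∩ (−K) = {0}`), with nonempty interior. -/
def IsProperCone {n : ℕ} (K : Set (Fin n → ℝ)) : Prop :=
  IsClosed K ∧ Convex ℝ K ∧ (∀ x ∈ K, ∀ t : ℝ, 0 ≤ t → t • x ∈ K) ∧
    K ∩ (-K) = {0} ∧ (interior K).Nonempty

/-- The dual cone `K* = {u : uᵀx ≥ 0 for all x ∈ K}`. -/
def dualCone' {n : ℕ} (K : Set (Fin n → ℝ)) : Set (Fin n → ℝ) :=
  {u | ∀ x ∈ K, 0 ≤ u ⬝ᵥ x}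

/-!
Homogenizing the constraint `A x - d ∈ K` gives the convex cone of pairs `(z, y)` with
`A y - z d ∈ K`, whose slice at `z = 1` is the original set. A point of the extended formulation is
a sum of `y h` with `(z h, y h)` in the `h`-th cone; when all `z h` are positive it is the convex
combination, with weights `z h`, of the points `(z h)⁻¹ y h` of the slices. Vanishing weights are
handled by perturbation: averaging points of the slices gives a `q` all of whose weights are
positive, so the open segment from the given point `x` to `q` lies in the convex hull, and `x` is in
its closure.
-/

section Homogenization

variable {𝕜 E F : Type*} [Ring 𝕜] [PartialOrder 𝕜]
  [AddCommGroup E] [Module 𝕜 E] [AddCommGroup F] [Module 𝕜 F]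

/-- The slice at height `1` of a cone in `𝕜 × E`: the set of which the cone is a homogenization.
The height is the first coordinate. -/
def unitSlice (C : ConvexCone 𝕜 (𝕜 × E)) : Set E :=
  {x | (1, x) ∈ C}

/-- The homogenization `{(z, y) : A y - z d ∈ K}` of the conic constraint `A x - d ∈ K`, without any
sign condition on the homogenizing variable `z`. -/
def homogenization (A : E →ₗ[𝕜] F) (d : F) (K : ConvexCone 𝕜 F) : ConvexCone 𝕜 (𝕜 × E) :=
  K.comap (A ∘ₗ LinearMap.snd 𝕜 𝕜 E - (LinearMap.fst 𝕜 𝕜 E).smulRight d)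

theorem mem_homogenization {A : E →ₗ[𝕜] F} {d : F} {K : ConvexCone 𝕜 F} {z : 𝕜} {y : E} :
    (z, y) ∈ homogenization A d K ↔ A y - z • d ∈ K :=
  Iff.rfl

theorem unitSlice_homogenization (A : E →ₗ[𝕜] F) (d : F) (K : ConvexCone 𝕜 F) :
    unitSlice (homogenization A d K) = {x | A x - d ∈ K} := by
  ext x
  simp only [unitSlice, Set.mem_ofPred_eq, mem_homogenization, one_smul]

end Homogenization

section ConvexHull

variable {ι 𝕜 E : Type*} [Field 𝕜] [LinearOrder 𝕜] [IsStrictOrderedRing 𝕜]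
  [AddCommGroup E] [Module 𝕜 E]

theorem inv_smul_mem_unitSlice {C : ConvexCone 𝕜 (𝕜 × E)} {z : 𝕜} {y : E} (hz : 0 < z)
    (hy : (z, y) ∈ C) : z⁻¹ • y ∈ unitSlice C := by
  simpa [unitSlice, hz.ne'] using C.smul_mem (inv_pos.2 hz) hy

theorem add_mem_of_convex_of_smul_mem {K : Set E} (hK : Convex 𝕜 K)
    (hsmul : ∀ x ∈ K, ∀ t : 𝕜, 0 < t → t • x ∈ K) {a b : E} (ha : a ∈ K) (hb : b ∈ K) :
    a + b ∈ K := by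
  have hmid : midpoint 𝕜 a b ∈ K := hK.midpoint_mem ha hb
  simpa [midpoint_eq_smul_add] using hsmul _ hmid 2 two_pos

variable [Fintype ι] {C : ι → ConvexCone 𝕜 (𝕜 × E)}

theorem sum_mem_convexHull_iUnion_unitSlice {z : ι → 𝕜} {y : ι → E} (hz : ∀ i, 0 < z i)
    (hsum : ∑ i, z i = 1) (hy : ∀ i, (z i, y i) ∈ C i) :
    ∑ i, y i ∈ convexHull 𝕜 (⋃ i, unitSlice (C i)) := by
  have hmem (i : ι) : (z i)⁻¹ • y i ∈ convexHull 𝕜 (⋃ i, unitSlice (C i)) :=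
    subset_convexHull 𝕜 _ (Set.mem_iUnion_of_mem i (inv_smul_mem_unitSlice (hz i) (hy i)))
  have hcomb : ∑ i, z i • (z i)⁻¹ • y i = ∑ i, y i :=
    Finset.sum_congr rfl fun i _ ↦ smul_inv_smul₀ (hz i).ne' (y i)
  rw [← hcomb]
  exact (convex_convexHull 𝕜 _).sum_mem (fun i _ ↦ (hz i).le) hsum fun i _ ↦ hmem i

theorem openSegment_subset_convexHull_iUnion_unitSlice {z w : ι → 𝕜} {y p : ι → E}
    (hz : ∀ i, 0 ≤ z i) (hz_sum : ∑ i, z i = 1) (hy : ∀ i, (z i, y i) ∈ C i)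
    (hw : ∀ i, 0 < w i) (hw_sum : ∑ i, w i = 1) (hp : ∀ i, (w i, p i) ∈ C i) :
    openSegment 𝕜 (∑ i, y i) (∑ i, p i) ⊆ convexHull 𝕜 (⋃ i, unitSlice (C i)) := by
  rintro _ ⟨a, b, ha, hb, hab, rfl⟩
  rw [Finset.smul_sum, Finset.smul_sum, ← Finset.sum_add_distrib]
  refine sum_mem_convexHull_iUnion_unitSlice (z := fun i ↦ a * z i + b * w i) (fun i ↦ ?_) ?_
    fun i ↦ (C i).add_mem ((C i).smul_mem ha (hy i)) ((C i).smul_mem hb (hp i))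
  · exact add_pos_of_nonneg_of_pos (mul_nonneg ha.le (hz i)) (mul_pos hb (hw i))
  · rw [Finset.sum_add_distrib, ← Finset.mul_sum, ← Finset.mul_sum, hz_sum, hw_sum, mul_one,
      mul_one, hab]

theorem exists_pos_weights_mem_of_nonempty_unitSlice [Nonempty ι]
    (hne : ∀ i, (unitSlice (C i)).Nonempty) :
    ∃ (w : ι → 𝕜) (p : ι → E), (∀ i, 0 < w i) ∧ ∑ i, w i = 1 ∧ ∀ i, (w i, p i) ∈ C i := by
  choose p hp using hne
  have hcard : (0 : 𝕜) < (Fintype.card ι : 𝕜)⁻¹ := by simp [Fintype.card_pos]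
  refine ⟨fun _ ↦ (Fintype.card ι : 𝕜)⁻¹, fun i ↦ (Fintype.card ι : 𝕜)⁻¹ • p i, fun _ ↦ hcard,
    by simp, fun i ↦ ?_⟩
  simpa using (C i).smul_mem hcard (hp i)

end ConvexHull

/-- A proper cone as a bundled `ConvexCone`. -/
def IsProperCone.toConvexCone {n : ℕ} {K : Set (Fin n → ℝ)} (hK : IsProperCone K) :
    ConvexCone ℝ (Fin n → ℝ) where
  carrier := K
  smul_mem' t ht x hx := hK.2.2.1 x hx t ht.le
  add_mem' _ ha _ hb :=
    add_mem_of_convex_of_smul_mem hK.2.1 (fun x hx t ht ↦ hK.2.2.1 x hx t ht.le) ha hb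

section Closure

variable {ι 𝕜 E : Type*} [Fintype ι] [Field 𝕜] [LinearOrder 𝕜] [IsStrictOrderedRing 𝕜]
  [TopologicalSpace 𝕜] [OrderTopology 𝕜]
  [AddCommGroup E] [Module 𝕜 E] [TopologicalSpace E] [ContinuousAdd E] [ContinuousSMul 𝕜 E]

theorem sum_mem_closure_convexHull_iUnion_unitSlice {C : ι → ConvexCone 𝕜 (𝕜 × E)}
    (hne : ∀ i, (unitSlice (C i)).Nonempty) {z : ι → 𝕜} {y : ι → E} (hz : ∀ i, 0 ≤ z i)
    (hsum : ∑ i, z i = 1) (hy : ∀ i, (z i, y i) ∈ C i) :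
    ∑ i, y i ∈ closure (convexHull 𝕜 (⋃ i, unitSlice (C i))) := by
  have : Nonempty ι := by
    by_contra! hι
    simp at hsum
  obtain ⟨w, p, hw, hw_sum, hp⟩ := exists_pos_weights_mem_of_nonempty_unitSlice hne
  exact closure_mono (openSegment_subset_convexHull_iUnion_unitSlice hz hsum hy hw hw_sum hp)
    (segment_subset_closure_openSegment (left_mem_segment 𝕜 _ _))

theorem cut_stmt_5_general {F : ι → Type*} [∀ h, AddCommGroup (F h)] [∀ h, Module 𝕜 (F h)]
    (A : ∀ h, E →ₗ[𝕜] F h) (d : ∀ h, F h) (K : ∀ h, ConvexCone 𝕜 (F h))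
    (hne : ∀ h, {x | A h x - d h ∈ K h}.Nonempty) :
    {x | ∃ (y : ι → E) (z : ι → 𝕜), ∑ h, y h = x ∧ ∑ h, z h = 1 ∧ (∀ h, 0 ≤ z h) ∧
        ∀ h, A h (y h) - z h • d h ∈ K h} ⊆
      closure (convexHull 𝕜 (⋃ h, {x | A h x - d h ∈ K h})) := by
  rintro _ ⟨y, z, rfl, hsum, hz, hy⟩
  simp only [← unitSlice_homogenization] at hne ⊢
  exact sum_mem_closure_convexHull_iUnion_unitSlice hne hz hsum fun h ↦ mem_homogenization.2 (hy h)

end Closure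

/-- If each disjunctive term is nonempty, the extended-formulation set `S`
is contained in the closed convex hull of the disjunctive set `D`. -/
theorem cut_stmt_5 {n H : ℕ} (m : Fin H → ℕ)
    (D : ∀ h : Fin H, Matrix (Fin (m h)) (Fin n) ℝ) (d : ∀ h : Fin H, Fin (m h) → ℝ)
    (Q : ∀ h : Fin H, Set (Fin (m h) → ℝ)) (hQ : ∀ h, IsProperCone (Q h))
    (hne : ∀ h : Fin H, {x : Fin n → ℝ | (D h).mulVec x - d h ∈ Q h}.Nonempty) :
    {x : Fin n → ℝ | ∃ (y : Fin H → Fin n → ℝ) (z : Fin H → ℝ),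
        (∑ h, y h) = x ∧ (∑ h, z h) = 1 ∧ (∀ h, 0 ≤ z h) ∧
        ∀ h, (D h).mulVec (y h) - z h • d h ∈ Q h} ⊆
      closure (convexHull ℝ
        (⋃ h : Fin H, {x : Fin n → ℝ | (D h).mulVec x - d h ∈ Q h})) := by
  exact cut_stmt_5_general (fun h ↦ (D h).mulVecLin) d (fun h ↦ (hQ h).toConvexCone) hne
end

section
/- The cut-generating conic program is strongly feasible: given A ∈ ℝ^{m×n}, b ∈ ℝ^m, a proper cone K ⊆ ℝⁿ, and for each h = 1,…,H a matrix D_h ∈ ℝ^{m_h×n}, a vector d_h ∈ ℝ^{m_h} and a proper cone Q_h ⊆ ℝ^{m_h}, there exist α ∈ ℝⁿ, β ∈ ℝ, and for each h vectors u_h ∈ ℝ^m, λ_h ∈ int K*, v_h ∈ int Q_h* such that α = Aᵀu_h + λ_h + D_hᵀv_h and β < bᵀu_h + d_hᵀv_h for every h. (In fact one may take u_h = 0 for all h.) -/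
open Matrix

/-!
The dual of a closed pointed cone spans the space: a functional vanishing on it is represented by
a point `x` such that both `x` and `-x` lie in the bidual, which is the cone itself. Being convex,
the dual therefore has nonempty interior, and the origin is a limit of its interior points.

Fix `α ∈ int K*`, `β < 0` and `u_h = 0`. The conditions `α - D_hᵀ v ∈ int K*` and `β < d_hᵀ v` are
open in `v` and hold at `v = 0`, so some `v_h ∈ int Q_h*` satisfies them;
put `λ_h = α - D_hᵀ v_h`.
-/

open Topology

section Dual

variable {E F : Type*} [AddCommGroup E] [Module ℝ E] [TopologicalSpace E]
  [IsTopologicalAddGroup E] [ContinuousSMul ℝ E] [LocallyConvexSpace ℝ E]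

theorem eq_zero_of_forall_mem_dual_apply_eq_zero [AddCommGroup F] [Module ℝ F]
    [TopologicalSpace F] {p : E →ₗ[ℝ] F →ₗ[ℝ] ℝ} [p.IsContPerfPair] {C : ProperCone ℝ E}
    (hC : (C : ConvexCone ℝ E).Salient) {x : E} (hx : ∀ y ∈ ProperCone.dual p C, p x y = 0) :
    x = 0 := by
  have mem_bidual : x ∈ ProperCone.dual p.flip (ProperCone.dual p (C : Set E) : Set F) :=
    fun y hy => (hx y hy).ge
  have neg_mem_bidual : -x ∈ ProperCone.dual p.flip (ProperCone.dual p (C : Set E) : Set F) :=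
    fun y hy => by simp [hx y hy]
  rw [ProperCone.dual_flip_dual] at mem_bidual neg_mem_bidual
  by_contra hx0
  exact hC x mem_bidual hx0 neg_mem_bidual

variable [NormedAddCommGroup F] [NormedSpace ℝ F] [FiniteDimensional ℝ F]

theorem span_dual_eq_top (p : E →ₗ[ℝ] F →ₗ[ℝ] ℝ) [p.IsContPerfPair] {C : ProperCone ℝ E}
    (hC : (C : ConvexCone ℝ E).Salient) :
    Submodule.span ℝ (ProperCone.dual p (C : Set E) : Set F) = ⊤ := by
  by_contra hspan
  obtain ⟨f, hf0, hf⟩ := Submodule.exists_le_ker_of_lt_top _ (lt_top_iff_ne_top.2 hspan)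
  obtain ⟨x, hx⟩ := p.toContPerfPair.surjective f.toContinuousLinearMap
  have hpx : p x = f := by rw [← p.toLinearMap_toContPerfPair, hx]; rfl
  have hx0 : x = 0 := eq_zero_of_forall_mem_dual_apply_eq_zero hC fun y hy => by
    rw [hpx]
    exact hf (Submodule.subset_span hy)
  exact hf0 (by rw [← hpx, hx0, map_zero])

theorem interior_nonempty_of_span_eq_top {s : Set F} (hs : Convex ℝ s) (h0 : 0 ∈ s)
    (hspan : Submodule.span ℝ s = ⊤) : (interior s).Nonempty := by
  rw [hs.interior_nonempty_iff_affineSpan_eq_top, ← Set.insert_eq_of_mem h0,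
    ← SetLike.coe_set_eq, affineSpan_insert_zero, hspan]
  rfl

theorem interior_dual_nonempty (p : E →ₗ[ℝ] F →ₗ[ℝ] ℝ) [p.IsContPerfPair] {C : ProperCone ℝ E}
    (hC : (C : ConvexCone ℝ E).Salient) :
    (interior (ProperCone.dual p (C : Set E) : Set F)).Nonempty :=
  interior_nonempty_of_span_eq_top (ProperCone.convex _) (zero_mem (ProperCone.dual p (C : Set E)))
    (span_dual_eq_top p hC)

end Dual

section Perturbation

variable {E F : Type*} [AddCommGroup E] [TopologicalSpace E] [IsTopologicalAddGroup E]
  [Module ℝ E] [AddCommGroup F] [TopologicalSpace F] [IsTopologicalAddGroup F] [Module ℝ F]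
  [ContinuousSMul ℝ F]

theorem exists_mem_interior_of_eventually_nhds {s : Set F} (hs : Convex ℝ s)
    (hne : (interior s).Nonempty) {x : F} (hx : x ∈ s) {P : F → Prop} (hP : ∀ᶠ y in 𝓝 x, P y) :
    ∃ y ∈ interior s, P y := by
  have hcl : x ∈ closure (interior s) := by
    rw [hs.closure_interior_eq_closure_of_nonempty_interior hne]
    exact subset_closure hx
  exact ((mem_closure_iff_frequently.1 hcl).and_eventually hP).exists

theorem exists_mem_interior_sub_mem_interior {s : Set E} {a : E} (ha : a ∈ interior s)
    {t : Set F} (ht : Convex ℝ t) (h0 : 0 ∈ t) (hne : (interior t).Nonempty)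
    (T : F →L[ℝ] E) (f : StrongDual ℝ F) {β : ℝ} (hβ : β < 0) :
    ∃ v ∈ interior t, a - T v ∈ interior s ∧ β < f v := by
  have hT : ∀ᶠ v in 𝓝 (0 : F), a - T v ∈ interior s :=
    (continuous_const.sub T.continuous).continuousAt.eventually_mem
      (isOpen_interior.mem_nhds (by simpa using ha))
  have hf : ∀ᶠ v in 𝓝 (0 : F), β < f v :=
    f.continuous.continuousAt.eventually_const_lt (by simpa using hβ)
  exact exists_mem_interior_of_eventually_nhds ht hne h0 (hT.and hf)

end Perturbation

instance dotProductBilin_isContPerfPair {R ι : Type*} [CommRing R] [TopologicalSpace R]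
    [IsTopologicalRing R] [Fintype ι] :
    (dotProductBilin R R : (ι → R) →ₗ[R] (ι → R) →ₗ[R] R).IsContPerfPair := by
  classical
  have hcont : Continuous fun z : (ι → R) × (ι → R) => z.1 ⬝ᵥ z.2 := by fun_prop
  have hbij : Function.Bijective fun x : ι → R =>
      (⟨dotProductBilin R R x, hcont.comp (.prodMk_right x)⟩ : StrongDual R (ι → R)) :=
    ⟨fun x y hxy => (dotProductEquiv R ι).injective (congrArg ContinuousLinearMap.toLinearMap hxy),
      fun f => ⟨(dotProductEquiv R ι).symm f, ContinuousLinearMap.coe_injective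
        ((dotProductEquiv R ι).apply_symm_apply f)⟩⟩
  refine ⟨hcont, hbij, ?_⟩
  convert hbij using 4 with y
  ext x
  exact dotProduct_comm _ _

theorem dualCone'_eq_dual {n : ℕ} (K : Set (Fin n → ℝ)) :
    dualCone' K = ProperCone.dual (dotProductBilin ℝ ℝ) K := by
  ext u
  simp only [dualCone', Set.mem_ofPred_eq, SetLike.mem_coe, ProperCone.mem_dual,
    dotProductBilin_apply_apply, dotProduct_comm u]

namespace IsProperCone

variable {n : ℕ} {K : Set (Fin n → ℝ)}

/-- An `IsProperCone` as a Mathlib `ProperCone`, a notion which asks neither that the cone be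
salient nor that it have nonempty interior. -/
def toProperCone (hK : IsProperCone K) : ProperCone ℝ (Fin n → ℝ) where
  carrier := K
  add_mem' {x y} hx hy := by
    have hmid : midpoint ℝ x y ∈ K := hK.2.1.midpoint_mem hx hy
    have htwo : (2 : ℝ) • midpoint ℝ x y = x + y := by simp [midpoint_eq_smul_add]
    exact htwo ▸ hK.2.2.1 _ hmid 2 zero_le_two
  zero_mem' := (hK.2.2.2.1.ge rfl).1
  smul_mem' t x hx := hK.2.2.1 x hx t t.2
  isClosed' := hK.1

theorem coe_toProperCone (hK : IsProperCone K) : (hK.toProperCone : Set (Fin n → ℝ)) = K := rfl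

theorem salient_toProperCone (hK : IsProperCone K) :
    (hK.toProperCone : ConvexCone ℝ (Fin n → ℝ)).Salient :=
  (PointedCone.salient_iff_inter_neg_eq_singleton _).2 hK.2.2.2.1

theorem interior_dualCone'_nonempty (hK : IsProperCone K) :
    (interior (dualCone' K)).Nonempty := by
  have hdual := interior_dual_nonempty (dotProductBilin ℝ ℝ) hK.salient_toProperCone
  rwa [coe_toProperCone, ← dualCone'_eq_dual] at hdual

end IsProperCone

theorem cut_stmt_7_general {n : ℕ} {ι : Type*} {K : Set (Fin n → ℝ)} {mq : ι → ℕ}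
    (D : ∀ h, Matrix (Fin (mq h)) (Fin n) ℝ) (d : ∀ h, Fin (mq h) → ℝ)
    {Q : ∀ h, Set (Fin (mq h) → ℝ)} (hQ : ∀ h, (interior (dualCone' (Q h))).Nonempty)
    {α : Fin n → ℝ} (hα : α ∈ interior (dualCone' K)) {β : ℝ} (hβ : β < 0) :
    ∃ (lam : ι → Fin n → ℝ) (v : ∀ h, Fin (mq h) → ℝ),
      ∀ h, lam h ∈ interior (dualCone' K) ∧ v h ∈ interior (dualCone' (Q h)) ∧
        α = lam h + (D h)ᵀ.mulVec (v h) ∧ β < d h ⬝ᵥ v h := by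
  have hblock (h : ι) : ∃ v ∈ interior (dualCone' (Q h)),
      α - (D h)ᵀ.mulVec v ∈ interior (dualCone' K) ∧ β < d h ⬝ᵥ v := by
    have hne := hQ h
    rw [dualCone'_eq_dual (Q h)] at hne ⊢
    exact exists_mem_interior_sub_mem_interior hα (ProperCone.convex _)
      (zero_mem (ProperCone.dual _ (Q h))) hne (D h)ᵀ.mulVecLin.toContinuousLinearMap
      ((dotProductBilin ℝ ℝ).toContPerfPair (d h)) hβ
  choose v hv hlam hβv using hblock
  exact ⟨fun h => α - (D h)ᵀ.mulVec (v h), v,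
    fun h => ⟨hlam h, hv h, (sub_add_cancel _ _).symm, hβv h⟩⟩

/-- The cut-generating conic program is strongly feasible. -/
theorem cut_stmt_7 {m n H : ℕ} (A : Matrix (Fin m) (Fin n) ℝ) (b : Fin m → ℝ)
    (K : Set (Fin n → ℝ)) (hK : IsProperCone K)
    (mq : Fin H → ℕ) (D : ∀ h : Fin H, Matrix (Fin (mq h)) (Fin n) ℝ)
    (d : ∀ h : Fin H, Fin (mq h) → ℝ) (Q : ∀ h : Fin H, Set (Fin (mq h) → ℝ))
    (hQ : ∀ h, IsProperCone (Q h)) :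
    ∃ (α : Fin n → ℝ) (β : ℝ) (u : Fin H → Fin m → ℝ)
      (lam : Fin H → Fin n → ℝ) (v : ∀ h : Fin H, Fin (mq h) → ℝ),
      ∀ h : Fin H, lam h ∈ interior (dualCone' K) ∧ v h ∈ interior (dualCone' (Q h)) ∧
        α = Aᵀ.mulVec (u h) + lam h + (D h)ᵀ.mulVec (v h) ∧
        β < b ⬝ᵥ u h + d h ⬝ᵥ v h := by
  obtain ⟨α, hα⟩ := hK.interior_dualCone'_nonempty
  obtain ⟨lam, v, h⟩ :=
    cut_stmt_7_general D d (fun h => (hQ h).interior_dualCone'_nonempty) hα neg_one_lt_zero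
  exact ⟨α, -1, 0, lam, v, by simpa using h⟩
end

section
/- (Supporting hyperplane under the polar normalization.) Let γ ∈ ℝⁿ. Suppose (α, β, u, λ, v) is optimal for the polar-normalized CGCP, i.e., it is CGCP-feasible, satisfies αᵀγ ≤ 1, and minimizes the objective α'ᵀx̄ − β' over all CGCP-feasible tuples (α', β', u', λ', v') with α'ᵀγ ≤ 1. Suppose (η, y, z) with η ≥ 0 is feasible for the polar MCP, i.e., Σ_h y_h = x̄ + ηγ, Σ_h z_h = 1, A y_h = z_h b, D_h y_h − z_h d_h ∈ Q_h, y_h ∈ K, z_h ≥ 0 for all h, and assume the zero-duality-gap relation αᵀx̄ − β = −η. Then αᵀ(x̄ + ηγ) = β. -/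
open Matrix

/-- A tuple \`(α, β, u, λ, v)\` is CGCP-feasible if
\`α = Aᵀu_h + λ_h + D_hᵀv_h\` and \`β ≤ bᵀu_h + d_hᵀv_h\` with \`λ_h ∈ K*\`,
\`v_h ∈ Q_h*\`, for every \`h\`. -/
def CGCPFeasible {m n H : ℕ} (A : Matrix (Fin m) (Fin n) ℝ) (b : Fin m → ℝ)
    (K : Set (Fin n → ℝ)) (mq : Fin H → ℕ)
    (D : ∀ h : Fin H, Matrix (Fin (mq h)) (Fin n) ℝ) (d : ∀ h : Fin H, Fin (mq h) → ℝ)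
    (Q : ∀ h : Fin H, Set (Fin (mq h) → ℝ))
    (α : Fin n → ℝ) (β : ℝ) (u : Fin H → Fin m → ℝ)
    (lam : Fin H → Fin n → ℝ) (v : ∀ h : Fin H, Fin (mq h) → ℝ) : Prop :=
  ∀ h : Fin H, lam h ∈ dualCone' K ∧ v h ∈ dualCone' (Q h) ∧
    α = Aᵀ.mulVec (u h) + lam h + (D h)ᵀ.mulVec (v h) ∧
    β ≤ b ⬝ᵥ u h + d h ⬝ᵥ v h

/-!
Pairing `α` with a lifted point term by term gives weak duality: `z h * β ≤ α (y h)`, and summing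
over `h` shows that the cut is valid at `x = ∑ h, y h`. At `x = x̄ + η • γ` this is one inequality.
The other comes from the normalization: moving from `x̄` along `η • γ` raises `α` by at most `η`,
which is exactly the violation `β - α x̄` when there is no duality gap.
-/

section Linear

variable {R E F ι : Type*} {G : ι → Type*} [CommRing R] [PartialOrder R] [IsOrderedRing R]
  [AddCommMonoid E] [Module R E] [AddCommMonoid F] [Module R F]
  [∀ h, AddCommGroup (G h)] [∀ h, Module R (G h)]

/-- Coordinate-free form of `CGCPFeasible`: the cut `β ≤ α x` for the disjunction with terms
`{x ∈ K | A x = b, D h x - d h ∈ Q h}`, certified on each term by dual multipliers. Row vectors are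
linear functionals, so `Aᵀu` is encoded as `u ∘ₗ A`. -/
structure IsCertifiedCut (A : E →ₗ[R] F) (b : F) (K : Set E) (D : ∀ h, E →ₗ[R] G h)
    (d : ∀ h, G h) (Q : ∀ h, Set (G h)) (α : Module.Dual R E) (β : R)
    (u : ι → Module.Dual R F) (l : ι → Module.Dual R E) (v : ∀ h, Module.Dual R (G h)) :
    Prop where
  mem_dual_cone : ∀ h, l h ∈ PointedCone.dual (Module.Dual.eval R E) K
  mem_dual_term : ∀ h, v h ∈ PointedCone.dual (Module.Dual.eval R (G h)) (Q h)
  eq_comp_add : ∀ h, α = u h ∘ₗ A + l h + v h ∘ₗ D h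
  le_apply : ∀ h, β ≤ u h b + v h (d h)

/-- Feasibility of `(y, z)` for the membership problem (MCP) at `x`: the lift of `x` to the
homogenized terms of the disjunction. The polar MCP is the case `x = x̄ + η • γ`. -/
structure IsHullLift [Fintype ι] (A : E →ₗ[R] F) (b : F) (K : Set E) (D : ∀ h, E →ₗ[R] G h)
    (d : ∀ h, G h) (Q : ∀ h, Set (G h)) (x : E) (y : ι → E) (z : ι → R) : Prop where
  sum_point : ∑ h, y h = x
  sum_weight : ∑ h, z h = 1
  map_eq : ∀ h, A (y h) = z h • b
  map_sub_mem : ∀ h, D h (y h) - z h • d h ∈ Q h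
  mem_cone : ∀ h, y h ∈ K
  weight_nonneg : ∀ h, 0 ≤ z h

variable {A : E →ₗ[R] F} {b : F} {K : Set E} {D : ∀ h, E →ₗ[R] G h} {d : ∀ h, G h}
  {Q : ∀ h, Set (G h)} {α : Module.Dual R E} {β : R} {u : ι → Module.Dual R F}
  {l : ι → Module.Dual R E} {v : ∀ h, Module.Dual R (G h)}

theorem IsCertifiedCut.mul_le_apply (hcut : IsCertifiedCut A b K D d Q α β u l v) (h : ι)
    {y : E} {z : R} (hA : A y = z • b) (hD : D h y - z • d h ∈ Q h) (hy : y ∈ K) (hz : 0 ≤ z) :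
    z * β ≤ α y := by
  have hl : 0 ≤ l h y := hcut.mem_dual_cone h hy
  have hv : z * v h (d h) ≤ v h (D h y) := by
    have : 0 ≤ v h (D h y - z • d h) := hcut.mem_dual_term h hD
    rwa [map_sub, map_smul, smul_eq_mul, sub_nonneg] at this
  calc z * β ≤ z * (u h b + v h (d h)) := mul_le_mul_of_nonneg_left (hcut.le_apply h) hz
    _ = u h (A y) + 0 + z * v h (d h) := by
      rw [hA, map_smul, smul_eq_mul, mul_add, add_zero]
    _ ≤ u h (A y) + l h y + v h (D h y) := by gcongr
    _ = α y := by
      rw [hcut.eq_comp_add h]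
      rfl

theorem IsCertifiedCut.le_apply_of_isHullLift [Fintype ι]
    (hcut : IsCertifiedCut A b K D d Q α β u l v) {x : E} {y : ι → E} {z : ι → R}
    (hlift : IsHullLift A b K D d Q x y z) : β ≤ α x :=
  calc β = ∑ h, z h * β := by rw [← Finset.sum_mul, hlift.sum_weight, one_mul]
    _ ≤ ∑ h, α (y h) := Finset.sum_le_sum fun h _ ↦
      hcut.mul_le_apply h (hlift.map_eq h) (hlift.map_sub_mem h) (hlift.mem_cone h)
        (hlift.weight_nonneg h)
    _ = α x := by rw [← map_sum, hlift.sum_point]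

theorem apply_add_smul_le_of_apply_le_one {x γ : E} {η : R} (hnorm : α γ ≤ 1) (hη : 0 ≤ η)
    (hgap : α x - β ≤ -η) : α (x + η • γ) ≤ β :=
  calc α (x + η • γ) = α x + η * α γ := by rw [map_add, map_smul, smul_eq_mul]
    _ ≤ α x + η := by gcongr; exact mul_le_of_le_one_right hη hnorm
    _ ≤ β := by linear_combination hgap

theorem cut_stmt_10_general [Fintype ι] (hcut : IsCertifiedCut A b K D d Q α β u l v)
    {x γ : E} {η : R} {y : ι → E} {z : ι → R} (hnorm : α γ ≤ 1) (hη : 0 ≤ η)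
    (hlift : IsHullLift A b K D d Q (x + η • γ) y z) (hgap : α x - β ≤ -η) :
    α (x + η • γ) = β :=
  (apply_add_smul_le_of_apply_le_one hnorm hη hgap).antisymm (hcut.le_apply_of_isHullLift hlift)

end Linear

theorem dotProductEquiv_transpose_mulVec {R m n : Type*} [CommSemiring R] [Fintype m]
    [DecidableEq m] [Fintype n] [DecidableEq n] (A : Matrix m n R) (u : m → R) :
    dotProductEquiv R n (Aᵀ *ᵥ u) = dotProductEquiv R m u ∘ₗ A.mulVecLin :=
  LinearMap.ext fun x ↦ by
    simp only [dotProductEquiv_apply_apply, LinearMap.comp_apply, mulVecLin_apply,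
      mulVec_transpose, dotProduct_mulVec]

theorem CGCPFeasible.isCertifiedCut {m n H : ℕ} {A : Matrix (Fin m) (Fin n) ℝ} {b : Fin m → ℝ}
    {K : Set (Fin n → ℝ)} {mq : Fin H → ℕ} {D : ∀ h : Fin H, Matrix (Fin (mq h)) (Fin n) ℝ}
    {d : ∀ h : Fin H, Fin (mq h) → ℝ} {Q : ∀ h : Fin H, Set (Fin (mq h) → ℝ)}
    {α : Fin n → ℝ} {β : ℝ} {u : Fin H → Fin m → ℝ} {lam : Fin H → Fin n → ℝ}
    {v : ∀ h : Fin H, Fin (mq h) → ℝ} (hfeas : CGCPFeasible A b K mq D d Q α β u lam v) :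
    IsCertifiedCut A.mulVecLin b K (fun h ↦ (D h).mulVecLin) d Q (dotProductEquiv ℝ _ α) β
      (fun h ↦ dotProductEquiv ℝ _ (u h)) (fun h ↦ dotProductEquiv ℝ _ (lam h))
      (fun h ↦ dotProductEquiv ℝ _ (v h)) where
  mem_dual_cone h := (hfeas h).1
  mem_dual_term h := (hfeas h).2.1
  eq_comp_add h := by
    rw [(hfeas h).2.2.1, map_add, map_add, dotProductEquiv_transpose_mulVec,
      dotProductEquiv_transpose_mulVec]
  le_apply h := by
    simpa only [dotProductEquiv_apply_apply, dotProduct_comm] using (hfeas h).2.2.2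

/-- Supporting hyperplane under the polar normalization: an optimal
polar-normalized CGCP solution is tight at `x̄ + ηγ` when there is no
duality gap. -/
theorem cut_stmt_10 {m n H : ℕ} (A : Matrix (Fin m) (Fin n) ℝ) (b : Fin m → ℝ)
    (K : Set (Fin n → ℝ)) (hK : IsProperCone K)
    (mq : Fin H → ℕ) (D : ∀ h : Fin H, Matrix (Fin (mq h)) (Fin n) ℝ)
    (d : ∀ h : Fin H, Fin (mq h) → ℝ) (Q : ∀ h : Fin H, Set (Fin (mq h) → ℝ))
    (hQ : ∀ h, IsProperCone (Q h))
    (xbar : Fin n → ℝ) (hxbar : A.mulVec xbar = b)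
    (γ : Fin n → ℝ)
    -- optimal solution of the polar-normalized CGCP
    (α : Fin n → ℝ) (β : ℝ) (u : Fin H → Fin m → ℝ)
    (lam : Fin H → Fin n → ℝ) (v : ∀ h : Fin H, Fin (mq h) → ℝ)
    (hfeas : CGCPFeasible A b K mq D d Q α β u lam v)
    (hnorm : α ⬝ᵥ γ ≤ 1)
    (hopt : ∀ (α' : Fin n → ℝ) (β' : ℝ) (u' : Fin H → Fin m → ℝ)
        (lam' : Fin H → Fin n → ℝ) (v' : ∀ h : Fin H, Fin (mq h) → ℝ),
        CGCPFeasible A b K mq D d Q α' β' u' lam' v' → α' ⬝ᵥ γ ≤ 1 →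
        α ⬝ᵥ xbar - β ≤ α' ⬝ᵥ xbar - β')
    -- feasible solution of the polar MCP
    (η : ℝ) (hη : 0 ≤ η) (y : Fin H → Fin n → ℝ) (z : Fin H → ℝ)
    (hy : (∑ h, y h) = xbar + η • γ) (hz : (∑ h, z h) = 1)
    (hAy : ∀ h, A.mulVec (y h) = z h • b)
    (hDy : ∀ h, (D h).mulVec (y h) - z h • d h ∈ Q h)
    (hyK : ∀ h, y h ∈ K) (hz0 : ∀ h, 0 ≤ z h)
    -- zero duality gap
    (hgap : α ⬝ᵥ xbar - β = -η) :
    α ⬝ᵥ (xbar + η • γ) = β := by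
  exact cut_stmt_10_general hfeas.isCertifiedCut hnorm hη ⟨hy, hz, hAy, hDy, hyK, hz0⟩ hgap.le
end

section
/- (Feasibility of the trivial-normalization membership problem.) Let σ_h ∈ int Q_h for each h and let x̄ ∈ ℝⁿ satisfy Ax̄ = b. Then the system: Σ_h y_h = x̄, Σ_h z_h = 1, A y_h = z_h b for all h, y_h ∈ K and z_h ≥ 0 for all h, D_h y_h + ησ_h − z_h d_h ∈ Q_h for all h, η ≥ 0, has a solution (y, z, η) if and only if x̄ ∈ K. -/
open Matrix

/-!
A feasible point writes `x̄` as a sum of members of the cone. Conversely, give each of the `H`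
blocks the same share `y_h = x̄ / H`, `z_h = 1 / H`; then every block must have
`v_h + η σ_h ∈ Q_h` for a fixed vector `v_h`. Since `v_h + η σ_h = η (σ_h + v_h / η)` and `σ_h` is
interior to `Q_h`, this holds as soon as `η` is large, hence for finitely many blocks at once.
-/

open Filter Topology

theorem add_mem_of_convex_of_smul_mem_s12 {𝕜 E : Type*} [Field 𝕜] [LinearOrder 𝕜]
    [IsStrictOrderedRing 𝕜] [AddCommGroup E] [Module 𝕜 E] {s : Set E} (hs : Convex 𝕜 s)
    (hsmul : ∀ x ∈ s, ∀ t : 𝕜, 0 < t → t • x ∈ s) {x y : E} (hx : x ∈ s) (hy : y ∈ s) :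
    x + y ∈ s := by
  have hdouble : (2 : 𝕜) • midpoint 𝕜 x y ∈ s := hsmul _ (hs.midpoint_mem hx hy) 2 two_pos
  rwa [two_smul, midpoint_add_self] at hdouble

theorem sum_inv_card_smul {𝕜 E : Type*} [DivisionRing 𝕜] [CharZero 𝕜] [AddCommMonoid E]
    [Module 𝕜 E] (ι : Type*) [Fintype ι] [Nonempty ι] (x : E) :
    ∑ _i : ι, (Fintype.card ι : 𝕜)⁻¹ • x = x := by
  rw [Finset.sum_const, Finset.card_univ, ← Nat.cast_smul_eq_nsmul 𝕜,
    smul_inv_smul₀ (Nat.cast_ne_zero.mpr Fintype.card_ne_zero)]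

section

variable {𝕜 : Type*} [Field 𝕜] [LinearOrder 𝕜] [IsStrictOrderedRing 𝕜] [TopologicalSpace 𝕜]
  [OrderTopology 𝕜]

theorem eventually_add_smul_mem_of_mem_interior {F : Type*} [AddCommMonoid F] [Module 𝕜 F]
    [TopologicalSpace F] [ContinuousAdd F] [ContinuousSMul 𝕜 F] {s : Set F}
    (hs : ∀ x ∈ s, ∀ t : 𝕜, 0 < t → t • x ∈ s) {w : F} (hw : w ∈ interior s) (v : F) :
    ∀ᶠ t : 𝕜 in atTop, v + t • w ∈ s := by
  have hlim : Tendsto (fun t : 𝕜 => t⁻¹ • v + w) atTop (𝓝 w) := by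
    simpa only [zero_smul, zero_add] using
      ((tendsto_inv_atTop_zero (𝕜 := 𝕜)).smul_const v).add_const w
  filter_upwards [hlim.eventually (mem_interior_iff_mem_nhds.mp hw), eventually_gt_atTop 0]
    with t hmem ht
  have hscaled : t • (t⁻¹ • v + w) ∈ s := hs _ hmem t ht
  rwa [smul_add, smul_inv_smul₀ ht.ne'] at hscaled

theorem exists_nonneg_forall_add_smul_mem {ι : Type*} [Finite ι] {F : ι → Type*}
    [∀ i, AddCommMonoid (F i)] [∀ i, Module 𝕜 (F i)] [∀ i, TopologicalSpace (F i)]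
    [∀ i, ContinuousAdd (F i)] [∀ i, ContinuousSMul 𝕜 (F i)] {s : ∀ i, Set (F i)}
    (hs : ∀ i, ∀ x ∈ s i, ∀ t : 𝕜, 0 < t → t • x ∈ s i) {w : ∀ i, F i}
    (hw : ∀ i, w i ∈ interior (s i)) (v : ∀ i, F i) :
    ∃ t : 𝕜, 0 ≤ t ∧ ∀ i, v i + t • w i ∈ s i :=
  ((eventually_ge_atTop 0).and <| eventually_all.mpr fun i =>
    eventually_add_smul_mem_of_mem_interior (hs i) (hw i) (v i)).exists

theorem cut_stmt_12_general {ι E G : Type*} [Fintype ι] [Nonempty ι]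
    [AddCommMonoid E] [Module 𝕜 E] [AddCommMonoid G] [Module 𝕜 G] {F : ι → Type*}
    [∀ h, AddCommGroup (F h)] [∀ h, Module 𝕜 (F h)] [∀ h, TopologicalSpace (F h)]
    [∀ h, ContinuousAdd (F h)] [∀ h, ContinuousSMul 𝕜 (F h)]
    (A : E →ₗ[𝕜] G) {b : G} (K : PointedCone 𝕜 E) (D : ∀ h, E →ₗ[𝕜] F h) (d : ∀ h, F h)
    {Q : ∀ h, Set (F h)} (hQ : ∀ h, ∀ x ∈ Q h, ∀ t : 𝕜, 0 < t → t • x ∈ Q h)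
    {σ : ∀ h, F h} (hσ : ∀ h, σ h ∈ interior (Q h)) {xbar : E} (hxbar : A xbar = b) :
    (∃ (y : ι → E) (z : ι → 𝕜) (η : 𝕜),
      (∑ h, y h) = xbar ∧ (∑ h, z h) = 1 ∧
      (∀ h, A (y h) = z h • b) ∧
      (∀ h, y h ∈ K) ∧ (∀ h, 0 ≤ z h) ∧
      (∀ h, D h (y h) + η • σ h - z h • d h ∈ Q h) ∧
      0 ≤ η) ↔ xbar ∈ K := by
  constructor
  · rintro ⟨y, -, -, rfl, -, -, hyK, -⟩
    exact K.sum_mem fun h _ => hyK h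
  · intro hxK
    let share : 𝕜 := (Fintype.card ι : 𝕜)⁻¹
    have hshare : 0 ≤ share := inv_nonneg.mpr (Nat.cast_nonneg _)
    have hsum : ∑ _h : ι, share = 1 := by
      simpa only [smul_eq_mul, mul_one] using sum_inv_card_smul (𝕜 := 𝕜) ι (1 : 𝕜)
    obtain ⟨η, hη, hslack⟩ :=
      exists_nonneg_forall_add_smul_mem hQ hσ fun h => D h (share • xbar) - share • d h
    refine ⟨fun _ => share • xbar, fun _ => share, η, sum_inv_card_smul ι xbar, hsum,
      fun _ => ?_, fun _ => K.smul_mem hshare hxK, fun _ => hshare, fun h => ?_, hη⟩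
    · rw [map_smul, hxbar]
    · rw [add_sub_right_comm]
      exact hslack h

end

namespace IsProperCone

variable {n : ℕ} {K : Set (Fin n → ℝ)}

theorem smul_mem_of_pos (hK : IsProperCone K) : ∀ x ∈ K, ∀ t : ℝ, 0 < t → t • x ∈ K :=
  fun x hx t ht => hK.2.2.1 x hx t ht.le

theorem zero_mem (hK : IsProperCone K) : (0 : Fin n → ℝ) ∈ K := by
  have hzero : (0 : Fin n → ℝ) ∈ K ∩ -K := hK.2.2.2.1 ▸ Set.mem_singleton 0
  exact hzero.1

/-- A proper cone as a bundled `PointedCone`, that is, a convex cone containing `0`; this forgets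
closedness, `K ∩ (-K) = {0}` and the interior point. -/
def toPointedCone (hK : IsProperCone K) : PointedCone ℝ (Fin n → ℝ) where
  carrier := K
  add_mem' := add_mem_of_convex_of_smul_mem_s12 hK.2.1 hK.smul_mem_of_pos
  zero_mem' := hK.zero_mem
  smul_mem' t x hx := hK.2.2.1 x hx t t.2

end IsProperCone

/-- The trivial-normalization membership problem is feasible iff `x̄ ∈ K`. -/
theorem cut_stmt_12 {m n H : ℕ} (hH : 0 < H)
    (A : Matrix (Fin m) (Fin n) ℝ) (b : Fin m → ℝ)
    (K : Set (Fin n → ℝ)) (hK : IsProperCone K)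
    (mq : Fin H → ℕ) (D : ∀ h : Fin H, Matrix (Fin (mq h)) (Fin n) ℝ)
    (d : ∀ h : Fin H, Fin (mq h) → ℝ) (Q : ∀ h : Fin H, Set (Fin (mq h) → ℝ))
    (hQ : ∀ h, IsProperCone (Q h))
    (σ : ∀ h : Fin H, Fin (mq h) → ℝ) (hσ : ∀ h, σ h ∈ interior (Q h))
    (xbar : Fin n → ℝ) (hxbar : A.mulVec xbar = b) :
    (∃ (y : Fin H → Fin n → ℝ) (z : Fin H → ℝ) (η : ℝ),
      (∑ h, y h) = xbar ∧ (∑ h, z h) = 1 ∧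
      (∀ h, A.mulVec (y h) = z h • b) ∧
      (∀ h, y h ∈ K) ∧ (∀ h, 0 ≤ z h) ∧
      (∀ h, (D h).mulVec (y h) + η • σ h - z h • d h ∈ Q h) ∧
      0 ≤ η) ↔ xbar ∈ K := by
  have : Nonempty (Fin H) := Fin.pos_iff_nonempty.mp hH
  exact cut_stmt_12_general A.mulVecLin hK.toPointedCone (fun h => (D h).mulVecLin) d
    (fun h => (hQ h).smul_mem_of_pos) hσ hxbar
end
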